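/- Let N be a positive integer and Ω := {0,1}^N. For E ⊆ Ω define the upper IID probability UiidP(E) := sup_{p∈[0,1]} B_p^N(E) and the upper exchangeability probability UEP(E) := sup_P P(E), where P ranges over all exchangeable probability measures on Ω. Then for every E ⊆ Ω: UiidP(E) ≤ UEP(E) ≤ 1.5 · √N · UiidP(E). -/

import Mathlib

/-!
Only singletons matter, since `Fin N → Bool` is finite. An exchangeable `P` is constant on each
level `S_k` (the sequences with exactly `k` ones), so conditionally on `S_k` it is uniform. Hence
`P (E ∩ S_k) = |E ∩ S_k| / (N choose k) * P S_k`, whereas, with `p = k / N`,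
`B_p^N (E) ≥ B_p^N (E ∩ S_k) = |E ∩ S_k| * p ^ k * (1 - p) ^ (N - k)`. The upper bound thus reduces
to `1 ≤ 1.5 * √N * (N choose k) * p ^ k * (1 - p) ^ (N - k)`: the probability that a binomial
variable equals its integral mean is at least `1 / (1.5 * √N)` (`one_le_binomial_mode`).
That estimate follows from the non-asymptotic Stirling bounds
`√(2πn) (n/e)^n ≤ n! ≤ e √n (n/e)^n` together with `√(k (N - k)) ≤ N / 2` and `e ^ 2 ≤ 3 √(2π)`.

The lower bound holds because every `B_p^N` is itself an exchangeable probability measure.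
-/

open MeasureTheory ENNReal NNReal

/-- The Bernoulli measure on `Bool` with probability `p` of `true`. -/
noncomputable def bern (p : ℝ) : Measure Bool :=
  ENNReal.ofReal p • Measure.dirac true + ENNReal.ofReal (1 - p) • Measure.dirac false

/-- The `N`-fold product of the Bernoulli measure with parameter `p`. -/
noncomputable def bernPi (N : ℕ) (p : ℝ) : Measure (Fin N → Bool) :=
  Measure.pi fun _ => bern p

/-- A probability measure on `Fin N → X` is exchangeable if it is invariant under
all coordinate permutations. -/
def Exchangeable {X : Type*} [MeasurableSpace X] {N : ℕ}
    (P : Measure (Fin N → X)) : Prop :=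
  ∀ π : Equiv.Perm (Fin N), Measure.map (fun x => x ∘ π) P = P

/-- The upper IID probability of `E ⊆ {0,1}^N`. -/
noncomputable def UiidP (N : ℕ) (E : Set (Fin N → Bool)) : ℝ≥0∞ :=
  ⨆ p ∈ Set.Icc (0 : ℝ) 1, bernPi N p E

/-- The upper exchangeability probability of `E ⊆ {0,1}^N`. -/
noncomputable def UEP (N : ℕ) (E : Set (Fin N → Bool)) : ℝ≥0∞ :=
  ⨆ (P : Measure (Fin N → Bool)) (_ : IsProbabilityMeasure P) (_ : Exchangeable P),
    P E

theorem factorial_le_exp_mul_sqrt (n : ℕ) (hn : n ≠ 0) :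
    (n.factorial : ℝ) ≤ Real.exp 1 * √n * (n / Real.exp 1) ^ n := by
  obtain ⟨m, rfl⟩ := Nat.exists_eq_succ_of_ne_zero hn
  have h : Stirling.stirlingSeq (m + 1) ≤ Stirling.stirlingSeq 1 :=
    Stirling.stirlingSeq'_antitone (Nat.zero_le m)
  rw [Stirling.stirlingSeq_one, Stirling.stirlingSeq, div_le_iff₀ (by positivity)] at h
  refine h.trans (le_of_eq ?_)
  rw [Real.sqrt_mul (by positivity)]
  field_simp

theorem exp_one_sq_le : Real.exp 1 ^ 2 ≤ 3 * √(2 * Real.pi) := by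
  have h1 : Real.exp 1 < 2.719 := Real.exp_one_lt_d9.trans (by norm_num)
  have h2 : (2.5 : ℝ) ≤ √(2 * Real.pi) :=
    Real.le_sqrt_of_sq_le (by nlinarith [Real.pi_gt_d2])
  have h3 := Real.exp_pos 1
  nlinarith

/-- The probability that a binomial variable with parameters `k + m` and `k / (k + m)` equals its
mean `k` is at least `1 / (1.5 * √(k + m))`, with denominators cleared. -/
theorem factorial_mul_le {k m : ℕ} (h : 0 < k + m) :
    (k.factorial * m.factorial * (k + m : ℕ) ^ (k + m) : ℝ) ≤
      1.5 * √(k + m : ℕ) * ((k + m).factorial * k ^ k * m ^ m) := by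
  have h1 : (1 : ℝ) ≤ √(k + m : ℕ) := Real.one_le_sqrt.2 (by exact_mod_cast h)
  -- If `k` or `m` vanishes, the probability is `1`.
  rcases Nat.eq_zero_or_pos k with rfl | hk
  · have : (0 : ℝ) ≤ m.factorial * (m : ℝ) ^ m := by positivity
    simp only [zero_add] at h1 ⊢
    simp
    nlinarith
  rcases Nat.eq_zero_or_pos m with rfl | hm
  · have : (0 : ℝ) ≤ k.factorial * (k : ℝ) ^ k := by positivity
    simp only [add_zero] at h1 ⊢
    simp
    nlinarith
  have hlow := Stirling.le_factorial_stirling (k + m)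
  have hkup := factorial_le_exp_mul_sqrt k hk.ne'
  have hmup := factorial_le_exp_mul_sqrt m hm.ne'
  have he := Real.exp_pos 1
  have hgm : 2 * (√k * √m) ≤ √(k + m : ℕ) * √(k + m : ℕ) := by
    rw [Real.mul_self_sqrt (by positivity)]
    push_cast
    nlinarith [sq_nonneg (√(k : ℝ) - √m), Real.sq_sqrt (Nat.cast_nonneg (α := ℝ) k),
      Real.sq_sqrt (Nat.cast_nonneg (α := ℝ) m)]
  have hsq : √(2 * Real.pi * (k + m : ℕ)) = √(2 * Real.pi) * √(k + m : ℕ) :=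
    Real.sqrt_mul (by positivity) _
  have hpow : ∀ j : ℕ, (j / Real.exp 1 : ℝ) ^ j = j ^ j / Real.exp 1 ^ j := fun j => div_pow _ _ _
  rw [hsq, hpow] at hlow
  rw [hpow] at hkup hmup
  set n : ℝ := ((k + m : ℕ) : ℝ) with hn
  set e := Real.exp 1
  have hconst : e ^ 2 * (√k * √m) ≤ 1.5 * √n * (√(2 * Real.pi) * √n) := by
    have := mul_le_mul exp_one_sq_le hgm (by positivity) (by positivity)
    linarith
  calc (k.factorial * m.factorial * n ^ (k + m) : ℝ)
      ≤ (e * √k * (k ^ k / e ^ k)) * (e * √m * (m ^ m / e ^ m)) * n ^ (k + m) := by gcongr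
    _ = e ^ 2 * (√k * √m) * (k ^ k * m ^ m * (n ^ (k + m) / e ^ (k + m))) := by
        rw [pow_add e]; field_simp
    _ ≤ 1.5 * √n * (√(2 * Real.pi) * √n) * (k ^ k * m ^ m * (n ^ (k + m) / e ^ (k + m))) := by
        gcongr
    _ = 1.5 * √n * ((√(2 * Real.pi) * √n * (n ^ (k + m) / e ^ (k + m))) * k ^ k * m ^ m) := by
        ring
    _ ≤ _ := by gcongr

theorem one_le_binomial_mode {N k : ℕ} (hN : 0 < N) (hk : k ≤ N) :
    (1 : ℝ) ≤ 1.5 * √N * (N.choose k * ((k / N : ℝ) ^ k * (1 - k / N : ℝ) ^ (N - k))) := by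
  obtain ⟨m, rfl⟩ := Nat.exists_eq_add_of_le hk
  have h := factorial_mul_le hN
  have hN' : (0 : ℝ) < (k + m : ℕ) := by exact_mod_cast hN
  have h1 : (1 - k / (k + m : ℕ) : ℝ) = m / (k + m : ℕ) := by
    field_simp; push_cast; ring
  rw [h1, Nat.add_sub_cancel_left, div_pow, div_pow, Nat.cast_add_choose]
  have : (0 : ℝ) < k.factorial * m.factorial * (k + m : ℕ) ^ (k + m) := by positivity
  rw [← div_le_div_iff_of_pos_right this, div_self this.ne'] at h
  refine h.trans (le_of_eq ?_)
  rw [pow_add]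
  field_simp

/-- The number of ones in a binary sequence. -/
def ones {N : ℕ} (ω : Fin N → Bool) : ℕ := (Finset.univ.filter fun i => ω i = true).card

theorem ones_le {N : ℕ} (ω : Fin N → Bool) : ones ω ≤ N := by
  simpa [ones] using (Finset.univ.filter fun i => ω i = true).card_le_univ

theorem card_ones_eq (N k : ℕ) :
    (Finset.univ.filter fun ω : Fin N → Bool => ones ω = k).card = N.choose k := by
  have h : (Finset.powersetCard k (Finset.univ : Finset (Fin N))).card = N.choose k := by simp
  rw [← h]
  refine Finset.card_nbij' (fun ω => Finset.univ.filter fun i => ω i = true)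
    (fun s i => decide (i ∈ s)) ?_ ?_ ?_ ?_
  · intro ω hω
    have : ones ω = k := by simpa using hω
    simpa [Finset.mem_powersetCard, ones] using this
  · intro s hs
    have : s.card = k := by simpa [Finset.mem_powersetCard] using hs
    exact Finset.mem_coe.2 (Finset.mem_filter.2 ⟨Finset.mem_univ _, by simpa [ones] using this⟩)
  · intro ω _
    ext i
    simp
  · intro s _
    ext i
    simp

theorem map_perm_singleton {N : ℕ} (P : Measure (Fin N → Bool)) (π : Equiv.Perm (Fin N))
    (ω : Fin N → Bool) : Measure.map (fun x => x ∘ π) P {ω} = P {ω ∘ π.symm} := by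
  rw [Measure.map_apply (measurable_of_countable _) (measurableSet_singleton _)]
  congr 1
  ext x
  simp only [Set.mem_preimage, Set.mem_singleton_iff]
  exact (π.eq_comp_symm x ω).symm

theorem Exchangeable.singleton_eq {N : ℕ} {P : Measure (Fin N → Bool)} (hP : Exchangeable P)
    {ω ω' : Fin N → Bool} (h : ones ω = ones ω') : P {ω} = P {ω'} := by
  have hc : Fintype.card {i // ω' i = true} = Fintype.card {i // ω i = true} := by
    rw [Fintype.card_subtype, Fintype.card_subtype]; exact h.symm
  let e := Fintype.equivOfCardEq hc
  have hω : ω' = ω ∘ e.extendSubtype := by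
    funext i
    by_cases hi : ω' i = true
    · rw [hi]; exact (e.extendSubtype_mem i hi).symm
    · have := e.extendSubtype_not_mem i hi
      simp_all
  have := map_perm_singleton P e.extendSubtype.symm ω
  rw [hP] at this
  exact this.trans (congrArg (fun x => P {x}) hω.symm)

theorem bern_singleton (p : ℝ) (b : Bool) :
    bern p {b} = if b = true then ENNReal.ofReal p else ENNReal.ofReal (1 - p) := by
  cases b <;> simp [bern]

theorem isProbabilityMeasure_bern {p : ℝ} (hp : p ∈ Set.Icc (0 : ℝ) 1) :
    IsProbabilityMeasure (bern p) := by
  refine ⟨?_⟩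
  simp only [bern, Measure.add_apply, Measure.smul_apply, measure_univ, smul_eq_mul, mul_one]
  rw [← ENNReal.ofReal_add hp.1 (sub_nonneg.2 hp.2)]
  simp

theorem bernPi_singleton {N : ℕ} {p : ℝ} (hp : p ∈ Set.Icc (0 : ℝ) 1) (ω : Fin N → Bool) :
    bernPi N p {ω} = ENNReal.ofReal (p ^ ones ω * (1 - p) ^ (N - ones ω)) := by
  have := isProbabilityMeasure_bern hp
  have hc : (Finset.univ.filter fun i => ¬ ω i = true).card = N - ones ω := by
    have := Finset.card_filter_add_card_filter_not (s := (Finset.univ : Finset (Fin N)))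
      (fun i => ω i = true)
    simp only [Finset.card_univ, Fintype.card_fin] at this
    unfold ones
    omega
  rw [bernPi, Measure.pi_singleton]
  simp only [bern_singleton]
  rw [Finset.prod_ite, Finset.prod_const, Finset.prod_const, hc,
    ENNReal.ofReal_mul (pow_nonneg hp.1 _), ENNReal.ofReal_pow hp.1,
    ENNReal.ofReal_pow (sub_nonneg.2 hp.2)]
  rfl

theorem exchangeable_bernPi {N : ℕ} {p : ℝ} (hp : p ∈ Set.Icc (0 : ℝ) 1) :
    Exchangeable (bernPi N p) := by
  have := isProbabilityMeasure_bern hp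
  intro π
  refine Measure.ext_of_singleton fun ω => ?_
  rw [map_perm_singleton, bernPi, Measure.pi_singleton, Measure.pi_singleton]
  exact Equiv.prod_comp π.symm fun i => bern p {ω i}

/-- On the level of sequences with `k` ones, the `P`-probability of `E` is controlled by its
`B_p^N`-probability with `p = k / N`. -/
theorem Exchangeable.measure_level_le {N : ℕ} (hN : 0 < N) {P : Measure (Fin N → Bool)}
    (hP : Exchangeable P) (E : Set (Fin N → Bool)) {k : ℕ} (hk : k ≤ N) :
    P (E ∩ {ω | ones ω = k}) ≤
      ENNReal.ofReal (1.5 * √N) * UiidP N E * P {ω | ones ω = k} := by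
  classical
  have hN' : (0 : ℝ) < N := by exact_mod_cast hN
  have hp : (k / N : ℝ) ∈ Set.Icc (0 : ℝ) 1 :=
    ⟨by positivity, div_le_one_of_le₀ (by exact_mod_cast hk) hN'.le⟩
  set p : ℝ := k / N
  set F := Finset.univ.filter fun ω : Fin N → Bool => ω ∈ E ∧ ones ω = k with hF
  set S := Finset.univ.filter fun ω : Fin N → Bool => ones ω = k with hS
  have hEF : E ∩ {ω | ones ω = k} = (F : Set (Fin N → Bool)) := by ext; simp [hF]
  have hSS : {ω | ones ω = k} = (S : Set (Fin N → Bool)) := by ext; simp [hS]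
  obtain ⟨a, ha⟩ : ∃ a, ∀ ω : Fin N → Bool, ones ω = k → P {ω} = a := by
    by_cases h : ∃ ω₀ : Fin N → Bool, ones ω₀ = k
    · obtain ⟨ω₀, h₀⟩ := h
      exact ⟨P {ω₀}, fun ω hω => hP.singleton_eq (hω.trans h₀.symm)⟩
    · exact ⟨0, fun ω hω => (h ⟨ω, hω⟩).elim⟩
  have hPF : P F = F.card * a := by
    rw [← sum_measure_singleton, Finset.sum_congr rfl fun ω hω => ha ω (Finset.mem_filter.1 hω).2.2,
      Finset.sum_const, nsmul_eq_mul]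
  have hPS : P S = N.choose k * a := by
    rw [← sum_measure_singleton, Finset.sum_congr rfl fun ω hω => ha ω (Finset.mem_filter.1 hω).2,
      Finset.sum_const, nsmul_eq_mul, card_ones_eq]
  set q : ℝ := p ^ k * (1 - p) ^ (N - k)
  have hB : F.card * ENNReal.ofReal q ≤ UiidP N E := by
    calc F.card * ENNReal.ofReal q = bernPi N p F := by
          rw [← sum_measure_singleton, Finset.sum_congr rfl fun ω hω => by
            rw [bernPi_singleton hp, (Finset.mem_filter.1 hω).2.2], Finset.sum_const, nsmul_eq_mul]
      _ ≤ bernPi N p E := measure_mono (by rw [← hEF]; exact Set.inter_subset_left)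
      _ ≤ UiidP N E := le_iSup₂ (f := fun p (_ : p ∈ Set.Icc (0 : ℝ) 1) => bernPi N p E) p hp
  have hone : 1 ≤ ENNReal.ofReal (1.5 * √N) * (N.choose k * ENNReal.ofReal q) := by
    rw [← ENNReal.ofReal_natCast (N.choose k), ← ENNReal.ofReal_mul (by positivity),
      ← ENNReal.ofReal_mul (by positivity), ENNReal.one_le_ofReal]
    exact one_le_binomial_mode hN hk
  rw [hEF, hSS, hPF, hPS]
  calc F.card * a
      ≤ F.card * a * (ENNReal.ofReal (1.5 * √N) * (N.choose k * ENNReal.ofReal q)) :=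
        le_mul_of_one_le_right' hone
    _ = ENNReal.ofReal (1.5 * √N) * (F.card * ENNReal.ofReal q) * (N.choose k * a) := by ring
    _ ≤ _ := by gcongr

/-- For any `E ⊆ {0,1}^N`: `UiidP(E) ≤ UEP(E) ≤ 1.5 √N UiidP(E)`. -/
theorem uiidP_le_uep_le_const_sqrt_mul_uiidP
    (N : ℕ) (hN : 0 < N) (E : Set (Fin N → Bool)) :
    UiidP N E ≤ UEP N E
    ∧ UEP N E ≤ ENNReal.ofReal (1.5 * Real.sqrt N) * UiidP N E := by
  constructor
  · refine iSup₂_le fun p hp => ?_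
    have := isProbabilityMeasure_bern hp
    have hprob : IsProbabilityMeasure (bernPi N p) := by unfold bernPi; infer_instance
    exact le_iSup_of_le (bernPi N p) (le_iSup₂_of_le hprob (exchangeable_bernPi hp) le_rfl)
  · refine iSup_le fun P => iSup₂_le fun hprob hP => ?_
    have hlevel : ∀ A : Set (Fin N → Bool),
        P A = ∑ k ∈ Finset.range (N + 1), P (A ∩ {ω | ones ω = k}) := by
      intro A
      rw [← measure_biUnion_finset]
      · congr 1
        ext ω
        simp [ones_le]
      · intro i _ j _ hij
        refine Set.disjoint_left.2 fun ω h1 h2 => hij (h1.2.symm.trans h2.2)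
      · exact fun _ _ => (Set.toFinite _).measurableSet
    calc P E = ∑ k ∈ Finset.range (N + 1), P (E ∩ {ω | ones ω = k}) := hlevel E
      _ ≤ ∑ k ∈ Finset.range (N + 1),
            ENNReal.ofReal (1.5 * √N) * UiidP N E * P (Set.univ ∩ {ω | ones ω = k}) := by
          refine Finset.sum_le_sum fun k hk => ?_
          rw [Set.univ_inter]
          exact hP.measure_level_le hN E (Nat.lt_succ_iff.1 (Finset.mem_range.1 hk))
      _ = ENNReal.ofReal (1.5 * √N) * UiidP N E := by
          rw [← Finset.mul_sum, ← hlevel, measure_univ, mul_one]
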